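/- arXiv:2306.17559 — 3 statements merged into one kernel-verified Lean document; each statement's English description precedes it below -/
import Mathlib

section
/- Let t ≥ 3, let G be a subgroup of U(2^N), and let L = Σ_P γ'_P P^⊗t (sum over unsigned Pauli operators P, coefficients γ'_P ∈ ℂ) satisfy U^⊗t L U†^⊗t = L for all U in the G-symmetric unitary group U_{N,G}. Then for every unsigned Pauli P with γ'_P ≠ 0 and every U ∈ U_{N,G}, one has U P U† = P. -/
open Matrix MeasureTheory

/-- Basis index for `N` qubits. -/
abbrev QubitIdx (N : ℕ) := Fin N → Fin 2

/-- Linear operators on the Hilbert space `(ℂ²)^⊗N`, as matrices. -/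
abbrev Op (N : ℕ) := Matrix (QubitIdx N) (QubitIdx N) ℂ

/-- The single-qubit Pauli matrices I, X, Y, Z. -/
noncomputable def σ1 : Fin 4 → Matrix (Fin 2) (Fin 2) ℂ
  | 0 => 1
  | 1 => !![0, 1; 1, 0]
  | 2 => !![0, -Complex.I; Complex.I, 0]
  | 3 => !![1, 0; 0, -1]

/-- The unsigned Pauli operator on `N` qubits indexed by `a : Fin N → Fin 4`
(the Kronecker product of the single-qubit Paulis `σ1 (a k)`). -/
noncomputable def pauli {N : ℕ} (a : Fin N → Fin 4) : Op N :=
  Matrix.of fun i j => ∏ k, σ1 (a k) (i k) (j k)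

/-- The phase factors `{±1, ±i}`. -/
def phases : Set ℂ := {1, -1, Complex.I, -Complex.I}

/-- The Pauli group on `N` qubits: phased unsigned Paulis. -/
def PauliGroup (N : ℕ) : Set (Op N) :=
  {P | ∃ c ∈ phases, ∃ a : Fin N → Fin 4, P = c • pauli a}

/-- A Clifford operator: a unitary whose conjugation action preserves the Pauli group. -/
def IsClifford {N : ℕ} (U : Op N) : Prop :=
  U ∈ Matrix.unitaryGroup (QubitIdx N) ℂ ∧
    ∀ P ∈ PauliGroup N, U * P * Uᴴ ∈ PauliGroup N

/-- The `G`-symmetric unitary group `U_{N,G}`: unitaries commuting with every element of `G`. -/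
def UnitarySym (N : ℕ) (G : Set (Op N)) : Set (Op N) :=
  {U | U ∈ Matrix.unitaryGroup (QubitIdx N) ℂ ∧ ∀ g ∈ G, U * g = g * U}

/-- The `G`-symmetric Clifford group `C_{N,G}`. -/
def CliffordSym (N : ℕ) (G : Set (Op N)) : Set (Op N) :=
  {U | IsClifford U ∧ U ∈ UnitarySym N G}

/-- `G` is a subgroup of the unitary group on `N` qubits. -/
def IsUnitarySubgroup {N : ℕ} (G : Set (Op N)) : Prop :=
  (∀ g ∈ G, g ∈ Matrix.unitaryGroup (QubitIdx N) ℂ) ∧ (1 : Op N) ∈ G ∧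
    (∀ g ∈ G, ∀ h ∈ G, g * h ∈ G) ∧ (∀ g ∈ G, gᴴ ∈ G)

/-- Operators on the `t`-fold tensor power `H^⊗t` of the `N`-qubit Hilbert space. -/
abbrev BigOp (N t : ℕ) := Matrix (Fin t → QubitIdx N) (Fin t → QubitIdx N) ℂ

/-- The `t`-fold tensor (Kronecker) power `A^⊗t` of an operator `A`. -/
noncomputable def tpow {N : ℕ} (t : ℕ) (A : Op N) : BigOp N t :=
  Matrix.of fun i j => ∏ s, A (i s) (j s)

noncomputable instance OpMeasurableSpace {N : ℕ} : MeasurableSpace (Op N) := borel (Op N)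

/-- The `t`-fold twirling channel `Φ_{t,μ}(L) = ∫ U^⊗t L (U^⊗t)† dμ(U)`, defined entrywise. -/
noncomputable def twirl {N : ℕ} (t : ℕ) (μ : Measure (Op N)) (L : BigOp N t) : BigOp N t :=
  Matrix.of fun i j => ∫ U, (tpow t U * L * (tpow t U)ᴴ) i j ∂μ

/-- The Kronecker power `A^⊗N` of a single-qubit operator, as an operator on `N` qubits. -/
noncomputable def kronPow {N : ℕ} (A : Matrix (Fin 2) (Fin 2) ℂ) : Op N :=
  Matrix.of fun i j => ∏ k, A (i k) (j k)

/-- The single-qubit unitary `e^{iθZ}`. -/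
noncomputable def expZ (θ : ℝ) : Matrix (Fin 2) (Fin 2) ℂ :=
  !![Complex.exp ((θ : ℂ) * Complex.I), 0; 0, Complex.exp (-(θ : ℂ) * Complex.I)]

/-- The permutation operator `V_σ` on the threefold tensor power `H^⊗3`. -/
noncomputable def permOp {N : ℕ} (σ : Equiv.Perm (Fin 3)) : BigOp N 3 :=
  Matrix.of fun i j => if i = j ∘ ⇑σ⁻¹ then 1 else 0

/-- The tensor product `G₁ ⊗ G₂ ⊗ G₃` as an operator on `H^⊗3`. -/
noncomputable def tprod3 {N : ℕ} (G₁ G₂ G₃ : Op N) : BigOp N 3 :=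
  Matrix.of fun i j => G₁ (i 0) (j 0) * G₂ (i 1) (j 1) * G₃ (i 2) (j 2)

/-- The Kronecker product of a finite family of square matrices. -/
noncomputable def piKron {ι n : Type*} [Fintype ι] (A : ι → Matrix n n ℂ) :
    Matrix (ι → n) (ι → n) ℂ :=
  Matrix.of fun i j => ∏ s, A s (i s) (j s)

theorem conjTranspose_piKron {ι n : Type*} [Fintype ι] (A : ι → Matrix n n ℂ) :
    (piKron A)ᴴ = piKron fun s => (A s)ᴴ := by
  ext i j
  simp [piKron, Matrix.conjTranspose_apply]

section piKron

variable {ι n : Type*} [Fintype ι] [DecidableEq ι] [Fintype n]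

theorem piKron_mul (A B : ι → Matrix n n ℂ) :
    piKron A * piKron B = piKron fun s => A s * B s := by
  ext i j
  simp only [piKron, Matrix.mul_apply, Matrix.of_apply, Finset.prod_univ_sum,
    Fintype.piFinset_univ, Finset.prod_mul_distrib]

theorem trace_piKron (A : ι → Matrix n n ℂ) : (piKron A).trace = ∏ s, (A s).trace := by
  simp only [piKron, Matrix.trace, Matrix.diag_apply, Matrix.of_apply, Finset.prod_univ_sum,
    Fintype.piFinset_univ]

end piKron

theorem trace_conj_mul_conj {n : Type*} [Fintype n] [DecidableEq n] {U : Matrix n n ℂ}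
    (hU : Uᴴ * U = 1) (A B : Matrix n n ℂ) :
    (U * A * Uᴴ * (U * B * Uᴴ)).trace = (A * B).trace := by
  have e : U * A * Uᴴ * (U * B * Uᴴ) = U * (A * B * Uᴴ) := by
    calc _ = U * A * (Uᴴ * U) * B * Uᴴ := by simp only [Matrix.mul_assoc]
      _ = _ := by rw [hU]; simp only [Matrix.mul_assoc, Matrix.mul_one]
  rw [e, Matrix.trace_mul_comm, Matrix.mul_assoc, hU, Matrix.mul_one]

theorem trace_σ1_mul (a b : Fin 4) : (σ1 a * σ1 b).trace = if a = b then 2 else 0 := by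
  fin_cases a <;> fin_cases b <;>
    simp [σ1, Matrix.trace, Fin.sum_univ_two] <;> norm_num

theorem sum_σ1_mul_σ1 (i j k l : Fin 2) :
    ∑ a, σ1 a i j * σ1 a k l = if i = l ∧ j = k then 2 else 0 := by
  fin_cases i <;> fin_cases j <;> fin_cases k <;> fin_cases l <;>
    simp [σ1, Fin.sum_univ_four] <;> norm_num

theorem trace_pauli_mul {N : ℕ} (a b : Fin N → Fin 4) :
    (pauli a * pauli b).trace = if a = b then 2 ^ N else 0 := by
  have h : (pauli a * pauli b).trace = ∏ k, (σ1 (a k) * σ1 (b k)).trace :=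
    (congrArg Matrix.trace (piKron_mul (fun k => σ1 (a k)) fun k => σ1 (b k))).trans
      (trace_piKron _)
  rw [h]
  simp only [trace_σ1_mul]
  split_ifs with hab
  · simp [hab]
  · obtain ⟨k, hk⟩ := Function.ne_iff.mp hab
    exact Finset.prod_eq_zero (Finset.mem_univ k) (if_neg hk)

theorem sum_pauli_mul_pauli {N : ℕ} (i j k l : QubitIdx N) :
    ∑ a : Fin N → Fin 4, pauli a i j * pauli a k l = if i = l ∧ j = k then 2 ^ N else 0 := by
  have h : ∑ a : Fin N → Fin 4, pauli a i j * pauli a k l =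
      ∏ s, ∑ b, σ1 b (i s) (j s) * σ1 b (k s) (l s) := by
    simp only [pauli, Matrix.of_apply, Finset.prod_univ_sum, Fintype.piFinset_univ,
      Finset.prod_mul_distrib]
  rw [h]
  simp only [sum_σ1_mul_σ1]
  split_ifs with hil
  · simp [hil]
  · obtain ⟨s, hs⟩ : ∃ s, ¬ (i s = l s ∧ j s = k s) := by
      by_contra! hc
      exact hil ⟨funext fun s => (hc s).1, funext fun s => (hc s).2⟩
    exact Finset.prod_eq_zero (Finset.mem_univ s) (if_neg hs)

/-- The Pauli expansion of an operator. -/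
theorem sum_trace_mul_pauli_smul {N : ℕ} (M : Op N) :
    ∑ a : Fin N → Fin 4, (M * pauli a).trace • pauli a = (2 : ℂ) ^ N • M := by
  ext i j
  simp only [Matrix.sum_apply, Matrix.smul_apply, smul_eq_mul, Matrix.trace, Matrix.diag_apply,
    Matrix.mul_apply, Finset.sum_mul]
  rw [Finset.sum_comm]
  simp_rw [Finset.sum_comm (γ := Fin N → Fin 4), mul_assoc, ← Finset.mul_sum,
    sum_pauli_mul_pauli]
  simp [ite_and, mul_comm]

/-- If `∑ γ_P P^⊗t` is fixed by conjugation with `U^⊗t`, then `U P Uᴴ` has no component along a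
Pauli `Q ≠ P` as soon as it has one along `P`. -/
theorem trace_conj_pauli_mul_eq_zero {N t : ℕ} (ht : 3 ≤ t) (γ : (Fin N → Fin 4) → ℂ) {U : Op N}
    (hU : Uᴴ * U = 1)
    (hL : tpow t U * (∑ a : Fin N → Fin 4, γ a • tpow t (pauli a)) * (tpow t U)ᴴ =
        ∑ a : Fin N → Fin 4, γ a • tpow t (pauli a))
    {a b : Fin N → Fin 4} (ha : γ a ≠ 0) (hab : a ≠ b)
    (haa : (U * pauli a * Uᴴ * pauli a).trace ≠ 0) :
    (U * pauli a * Uᴴ * pauli b).trace = 0 := by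
  obtain ⟨t, rfl⟩ := Nat.exists_eq_add_of_le' ht
  let B : Fin (t + 3) → Op N :=
    Fin.cons (U * pauli a * Uᴴ) (Fin.cons (pauli b) fun _ => pauli a)
  have htp (A : Op N) : (tpow (t + 3) A * piKron B).trace = ∏ s, (A * B s).trace :=
    (congrArg Matrix.trace (piKron_mul (fun _ => A) B)).trans (trace_piKron _)
  have hconj (A : Op N) :
      tpow (t + 3) U * tpow (t + 3) A * (tpow (t + 3) U)ᴴ = tpow (t + 3) (U * A * Uᴴ) := by
    change piKron (fun _ => U) * piKron (fun _ => A) * (piKron fun _ => U)ᴴ =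
      piKron fun _ => U * A * Uᴴ
    rw [conjTranspose_piKron, piKron_mul, piKron_mul]
  have h := congrArg (fun M => (M * piKron B).trace) hL
  simp only [Matrix.mul_sum, Matrix.sum_mul, Matrix.mul_smul, Matrix.smul_mul, hconj,
    Matrix.trace_sum, Matrix.trace_smul, htp, smul_eq_mul] at h
  simp only [Fin.prod_univ_succ, B, Fin.cons_zero, Fin.cons_succ,
    trace_conj_mul_conj hU, trace_pauli_mul,
    Finset.prod_const] at h
  rw [Finset.sum_eq_single a (by intro c _ hc; simp [hc]) (by simp),
    Finset.sum_eq_zero (by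
      intro c _
      by_cases hc : c = a
      · simp [hc, hab]
      · simp [hc])] at h
  simpa [ha, haa] using h

/-- If `∑ γ_P P^⊗t` is fixed by conjugation with `U^⊗t` and the component of `U P Uᴴ` along `P` is
neither `0` nor `-1`, then `U` fixes `P`. -/
theorem conj_pauli_eq {N t : ℕ} (ht : 3 ≤ t) (γ : (Fin N → Fin 4) → ℂ) {U : Op N}
    (hU : Uᴴ * U = 1)
    (hL : tpow t U * (∑ a : Fin N → Fin 4, γ a • tpow t (pauli a)) * (tpow t U)ᴴ =
        ∑ a : Fin N → Fin 4, γ a • tpow t (pauli a))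
    {a : Fin N → Fin 4} (ha : γ a ≠ 0)
    (haa : (U * pauli a * Uᴴ * pauli a).trace ≠ 0)
    (hneg : (U * pauli a * Uᴴ * pauli a).trace ≠ -2 ^ N) :
    U * pauli a * Uᴴ = pauli a := by
  have hexp := sum_trace_mul_pauli_smul (U * pauli a * Uᴴ)
  rw [Finset.sum_eq_single a (by
    intro b _ hb
    rw [trace_conj_pauli_mul_eq_zero ht γ hU hL ha hb.symm haa, zero_smul]) (by simp)] at hexp
  have h2 : (2 : ℂ) ^ N ≠ 0 := pow_ne_zero _ two_ne_zero
  have hsq : (U * pauli a * Uᴴ * (U * pauli a * Uᴴ)).trace = 2 ^ N := by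
    rw [trace_conj_mul_conj hU, trace_pauli_mul, if_pos rfl]
  have hc : (U * pauli a * Uᴴ * pauli a).trace = 2 ^ N := by
    have h := congrArg (fun M => (U * pauli a * Uᴴ * M).trace) hexp
    simp only [Matrix.mul_smul, Matrix.trace_smul, hsq, smul_eq_mul] at h
    exact (mul_self_eq_mul_self_iff.mp h).resolve_right hneg
  rw [hc] at hexp
  exact (smul_right_injective _ h2 hexp).symm

open Topology in
theorem commute_of_eventually_commute_exp_smul {A : Type*} [NormedRing A] [NormedAlgebra ℝ A]
    [CompleteSpace A] {x y : A} (h : ∀ᶠ s : ℝ in 𝓝 0, Commute (NormedSpace.exp (s • x)) y) :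
    Commute x y := by
  have hderiv : HasDerivAt (fun s : ℝ => NormedSpace.exp (s • x)) x 0 := by
    simpa using hasDerivAt_exp_smul_const (𝕂 := ℝ) x (0 : ℝ)
  have hd := (hderiv.mul_const y).sub (hderiv.const_mul y)
  refine sub_eq_zero.mp (hd.unique ((hasDerivAt_const (0 : ℝ) (0 : A)).congr_of_eventuallyEq ?_))
  filter_upwards [h] with s hs using sub_eq_zero.mpr hs.eq

theorem continuous_exp_smul {A : Type*} [NormedRing A] [NormedAlgebra ℝ A] [CompleteSpace A]
    (x : A) : Continuous fun s : ℝ => NormedSpace.exp (s • x) :=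
  (differentiable_exp_smul_const ℝ x).continuous

namespace Matrix

variable {n : Type*} [Fintype n] [DecidableEq n]

theorem conjTranspose_exp_mul_exp_of_conjTranspose_eq_neg {K : Matrix n n ℂ} (hK : Kᴴ = -K) :
    (NormedSpace.exp K)ᴴ * NormedSpace.exp K = 1 := by
  rw [← Matrix.exp_conjTranspose, hK,
    ← Matrix.exp_add_of_commute (-K) K (Commute.refl K).neg_left, neg_add_cancel,
    NormedSpace.exp_zero]

open scoped Norms.Operator

open Topology in
theorem commute_of_eventually_commute_exp_smul {K M : Matrix n n ℂ}
    (h : ∀ᶠ s : ℝ in 𝓝 0, Commute (NormedSpace.exp (s • K)) M) : Commute K M :=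
  _root_.commute_of_eventually_commute_exp_smul h

theorem continuous_exp_smul (K : Matrix n n ℂ) :
    Continuous fun s : ℝ => NormedSpace.exp (s • K) :=
  _root_.continuous_exp_smul K

end Matrix

open Topology in
theorem commute_pauli_of_conjTranspose_eq_neg {N t : ℕ} (ht : 3 ≤ t) (G : Set (Op N))
    (γ : (Fin N → Fin 4) → ℂ)
    (hL : ∀ U ∈ UnitarySym N G,
      tpow t U * (∑ a : Fin N → Fin 4, γ a • tpow t (pauli a)) * (tpow t U)ᴴ =
        ∑ a : Fin N → Fin 4, γ a • tpow t (pauli a))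
    {a : Fin N → Fin 4} (ha : γ a ≠ 0) {K : Op N} (hK : Kᴴ = -K)
    (hKG : ∀ g ∈ G, Commute K g) : Commute K (pauli a) := by
  let V : ℝ → Op N := fun s => NormedSpace.exp (s • K)
  have hV1 (s : ℝ) : (V s)ᴴ * V s = 1 :=
    Matrix.conjTranspose_exp_mul_exp_of_conjTranspose_eq_neg
      (by rw [Matrix.conjTranspose_smul, hK, smul_neg, star_trivial])
  have hVG (s : ℝ) : V s ∈ UnitarySym N G :=
    ⟨Matrix.mem_unitaryGroup_iff'.mpr (hV1 s), fun g hg =>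
      (((hKG g hg).smul_left s).exp_left).eq⟩
  have hV0 : V 0 = 1 := by simp [V]
  have hV : Continuous V := Matrix.continuous_exp_smul K
  have hcont : Continuous fun s => (V s * pauli a * (V s)ᴴ * pauli a).trace := by
    fun_prop
  have hval : (V 0 * pauli a * (V 0)ᴴ * pauli a).trace = 2 ^ N := by
    simp [hV0, trace_pauli_mul]
  have h2 : (2 : ℂ) ^ N ≠ 0 := pow_ne_zero _ two_ne_zero
  refine Matrix.commute_of_eventually_commute_exp_smul ?_
  filter_upwards [hcont.continuousAt.eventually_ne (hval.trans_ne h2),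
    hcont.continuousAt.eventually_ne (hval.trans_ne (self_ne_neg.mpr h2))] with s hs hs'
  have h := conj_pauli_eq ht γ (hV1 s) (hL _ (hVG s)) ha hs hs'
  calc V s * pauli a = V s * pauli a * ((V s)ᴴ * V s) := by rw [hV1, Matrix.mul_one]
    _ = _ := by rw [← Matrix.mul_assoc, h]

/-- if `L = Σ_P γ'_P P^⊗t` with `t ≥ 3` is invariant under `U^⊗t`
conjugation for all `U ∈ U_{N,G}`, then every Pauli appearing in `L` with nonzero
coefficient is fixed by all `U ∈ U_{N,G}`. -/
theorem stmt7 {N : ℕ} (t : ℕ) (ht : 3 ≤ t)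
    (G : Set (Op N)) (hG : IsUnitarySubgroup G)
    (γ : (Fin N → Fin 4) → ℂ)
    (hL : ∀ U ∈ UnitarySym N G,
      tpow t U * (∑ a : Fin N → Fin 4, γ a • tpow t (pauli a)) * (tpow t U)ᴴ =
        ∑ a : Fin N → Fin 4, γ a • tpow t (pauli a)) :
    ∀ a : Fin N → Fin 4, γ a ≠ 0 → ∀ U ∈ UnitarySym N G, U * pauli a * Uᴴ = pauli a := by
  intro a ha U hU
  have hUG (g) (hg : g ∈ G) : Commute U g := hU.2 g hg
  have hUG' (g) (hg : g ∈ G) : Commute Uᴴ g := by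
    have h := (hUG _ (hG.2.2.2 g hg)).star_star
    rwa [Matrix.star_eq_conjTranspose, Matrix.star_eq_conjTranspose,
      Matrix.conjTranspose_conjTranspose] at h
  have hsub : Commute (U - Uᴴ) (pauli a) :=
    commute_pauli_of_conjTranspose_eq_neg ht G γ hL ha (by simp) fun g hg =>
      (hUG g hg).sub_left (hUG' g hg)
  have hadd : Commute (Complex.I • (U + Uᴴ)) (pauli a) :=
    commute_pauli_of_conjTranspose_eq_neg ht G γ hL ha
      (by simp [Matrix.conjTranspose_smul, add_comm]) fun g hg =>
      ((hUG g hg).add_left (hUG' g hg)).smul_left _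
  have hadd' : Commute (U + Uᴴ) (pauli a) := by
    simpa [smul_smul] using hadd.smul_left (-Complex.I)
  have hcomm : Commute U (pauli a) := by
    have h := (hadd'.add_left hsub).smul_left (2⁻¹ : ℂ)
    rwa [show (2⁻¹ : ℂ) • (U + Uᴴ + (U - Uᴴ)) = U by module] at h
  rw [hcomm.eq, Matrix.mul_assoc, show U * Uᴴ = 1 from Matrix.mem_unitaryGroup_iff.mp hU.1,
    Matrix.mul_one]
end

section
/- Let G be a subgroup of U(2^N) such that the G-symmetric Clifford group C_{N,G} is a G-symmetric unitary 3-design. Define Q to be the subgroup of the Pauli group generated by {Q ∈ {I,X,Y,Z}^⊗N : ∃ G ∈ G with tr(G Q) ≠ 0}. Then U_{N,G} = U_{N,Q}, i.e., a unitary commutes with all elements of G if and only if it commutes with all elements of Q. -/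
open Matrix MeasureTheory

/-! ### Multiplicativity of tensor powers -/

theorem tpow_mul {N t : ℕ} (A B : Op N) : tpow t (A * B) = tpow t A * tpow t B := by
  ext i j
  simp only [tpow, Matrix.mul_apply, Matrix.of_apply, Finset.prod_univ_sum, Fintype.piFinset_univ,
    Finset.prod_mul_distrib]

theorem tpow_conjTranspose {N t : ℕ} (A : Op N) : tpow t Aᴴ = (tpow t A)ᴴ := by
  ext i j
  simp [tpow, Matrix.conjTranspose_apply]

theorem continuous_tpow {N t : ℕ} : Continuous (tpow t : Op N → BigOp N t) := by
  refine continuous_matrix fun i j => ?_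
  simp only [tpow, Matrix.of_apply]
  exact continuous_finsetProd _ fun s _ => continuous_id.matrix_elem _ _

/-! ### Orthogonality and completeness of the Pauli operators -/

theorem trace_σ1_mul_σ1 (a b : Fin 4) :
    ∑ i, ∑ j, σ1 a i j * σ1 b j i = if a = b then 2 else 0 := by
  fin_cases a <;> fin_cases b <;> simp [σ1, Fin.sum_univ_two] <;> norm_num

theorem σ1_mul_self (a : Fin 4) : σ1 a * σ1 a = 1 := by
  fin_cases a <;> ext i j <;> fin_cases i <;> fin_cases j <;>
    simp [σ1, Matrix.mul_apply, Fin.sum_univ_two]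

theorem pauli_mul_self {N : ℕ} (a : Fin N → Fin 4) : pauli a * pauli a = 1 := by
  ext i j
  have h : ∀ k, ∑ x, σ1 (a k) (i k) x * σ1 (a k) x (j k) = if i k = j k then 1 else 0 := by
    intro k
    rw [← Matrix.mul_apply, σ1_mul_self, Matrix.one_apply]
  have h' := Finset.prod_univ_sum (fun _ : Fin N => (Finset.univ : Finset (Fin 2)))
    (fun k x => σ1 (a k) (i k) x * σ1 (a k) x (j k))
  simp only [h, Fintype.piFinset_univ, Finset.prod_mul_distrib] at h'
  simp only [pauli, Matrix.mul_apply, Matrix.of_apply, ← h', Matrix.one_apply,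
    Finset.prod_ite_zero, Finset.prod_const_one, Finset.mem_univ, forall_true_left, funext_iff]

theorem trace_pauli_mul_pauli_of_ne {N : ℕ} {a b : Fin N → Fin 4} (hab : a ≠ b) :
    trace (pauli a * pauli b) = 0 := by
  obtain ⟨k, hk⟩ := Function.ne_iff.mp hab
  have h : trace (pauli a * pauli b) = ∏ k, ∑ i, ∑ j, σ1 (a k) i j * σ1 (b k) j i := by
    simp only [Matrix.trace, Matrix.diag, pauli, Matrix.mul_apply, Matrix.of_apply,
      Finset.prod_univ_sum, Fintype.piFinset_univ, Finset.prod_mul_distrib]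
  rw [h]
  exact Finset.prod_eq_zero (Finset.mem_univ k) (by rw [trace_σ1_mul_σ1, if_neg hk])

theorem sum_trace_smul_pauli {N : ℕ} (A : Op N) :
    ∑ a, trace (A * pauli a) • pauli a = (2 ^ N : ℂ) • A := by
  ext i j
  have h : ∀ a : Fin N → Fin 4, trace (A * pauli a) * pauli a i j
      = ∑ l, ∑ k, A l k * (pauli a i j * pauli a k l) := by
    intro a
    simp only [Matrix.trace, Matrix.diag, Matrix.mul_apply, Finset.sum_mul]
    exact Finset.sum_congr rfl fun l _ => Finset.sum_congr rfl fun k _ => by ring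
  simp only [Matrix.sum_apply, Matrix.smul_apply, smul_eq_mul, h]
  rw [Finset.sum_comm]
  simp_rw [Finset.sum_comm (s := (Finset.univ : Finset (Fin N → Fin 4))), ← Finset.mul_sum,
    sum_pauli_mul_pauli, ite_and, mul_ite, mul_zero]
  simp [mul_comm]

theorem pauliGroup_finite (N : ℕ) : (PauliGroup N).Finite := by
  have h : (phases ×ˢ (Set.univ : Set (Fin N → Fin 4))).Finite :=
    (by simp [phases] : phases.Finite).prod Set.finite_univ
  refine (h.image fun x => x.1 • pauli x.2).subset ?_
  rintro P ⟨c, hc, a, rfl⟩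
  exact ⟨(c, a), ⟨hc, Set.mem_univ _⟩, rfl⟩

/-! ### Symmetric unitaries and Cliffords -/

theorem UnitarySym.conjTranspose_mul_self {N : ℕ} {G : Set (Op N)} {V : Op N}
    (hV : V ∈ UnitarySym N G) : Vᴴ * V = 1 :=
  Matrix.mem_unitaryGroup_iff'.mp hV.1

theorem UnitarySym.mul_conjTranspose_self {N : ℕ} {G : Set (Op N)} {V : Op N}
    (hV : V ∈ UnitarySym N G) : V * Vᴴ = 1 :=
  Matrix.mem_unitaryGroup_iff.mp hV.1

theorem UnitarySym.mul_mem {N : ℕ} {G : Set (Op N)} {V W : Op N}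
    (hV : V ∈ UnitarySym N G) (hW : W ∈ UnitarySym N G) : V * W ∈ UnitarySym N G := by
  refine ⟨Submonoid.mul_mem _ hV.1 hW.1, fun g hg => ?_⟩
  rw [mul_assoc, hW.2 g hg, ← mul_assoc, hV.2 g hg, mul_assoc]

theorem UnitarySym.conjTranspose_commute {N : ℕ} {G : Set (Op N)} {V g : Op N}
    (hV : V ∈ UnitarySym N G) (hg : g ∈ G) : Commute Vᴴ g := by
  have h1 := UnitarySym.conjTranspose_mul_self hV
  have h2 := UnitarySym.mul_conjTranspose_self hV
  calc Vᴴ * g = Vᴴ * g * (V * Vᴴ) := by rw [h2, mul_one]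
    _ = Vᴴ * (g * V) * Vᴴ := by noncomm_ring
    _ = Vᴴ * V * g * Vᴴ := by rw [← hV.2 g hg]; noncomm_ring
    _ = g * Vᴴ := by rw [h1, one_mul]

theorem CliffordSym.one_mem {N : ℕ} {G : Set (Op N)} : (1 : Op N) ∈ CliffordSym N G :=
  ⟨⟨Submonoid.one_mem _, by simp⟩, Submonoid.one_mem _, by simp⟩

theorem CliffordSym.mul_mem {N : ℕ} {G : Set (Op N)} {V W : Op N}
    (hV : V ∈ CliffordSym N G) (hW : W ∈ CliffordSym N G) : V * W ∈ CliffordSym N G := by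
  refine ⟨⟨Submonoid.mul_mem _ hV.1.1 hW.1.1, fun P hP => ?_⟩, UnitarySym.mul_mem hV.2 hW.2⟩
  have := hV.1.2 _ (hW.1.2 P hP)
  simpa only [Matrix.conjTranspose_mul, mul_assoc] using this

theorem UnitarySym.trace_conj_mul_conj {N : ℕ} {G : Set (Op N)} {V : Op N}
    (hV : V ∈ UnitarySym N G) (A B : Op N) :
    trace (V * A * Vᴴ * (V * B * Vᴴ)) = trace (A * B) := by
  have h : V * A * Vᴴ * (V * B * Vᴴ) = V * (A * B * Vᴴ) := by
    calc _ = V * A * (Vᴴ * V) * B * Vᴴ := by noncomm_ring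
      _ = _ := by rw [UnitarySym.conjTranspose_mul_self hV]; noncomm_ring
  rw [h, Matrix.trace_mul_comm, mul_assoc, UnitarySym.conjTranspose_mul_self hV, mul_one]

theorem UnitarySym.trace_mul_conj {N : ℕ} {G : Set (Op N)} {V g : Op N}
    (hV : V ∈ UnitarySym N G) (hg : g ∈ G) (A : Op N) :
    trace (g * (V * A * Vᴴ)) = trace (g * A) := by
  have h : g * (V * A * Vᴴ) = V * (g * A * Vᴴ) := by
    simp only [← mul_assoc, hV.2 g hg]
  rw [h, Matrix.trace_mul_comm, mul_assoc, UnitarySym.conjTranspose_mul_self hV, mul_one]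

theorem UnitarySym.conj_injective {N : ℕ} {G : Set (Op N)} {V : Op N}
    (hV : V ∈ UnitarySym N G) : Function.Injective fun A => V * A * Vᴴ := by
  intro A B hAB
  have h : ∀ C, Vᴴ * (V * C * Vᴴ) * V = C := by
    intro C
    calc _ = Vᴴ * V * C * (Vᴴ * V) := by noncomm_ring
      _ = C := by rw [UnitarySym.conjTranspose_mul_self hV, one_mul, mul_one]
  rw [← h A, ← h B]
  exact congrArg (fun X => Vᴴ * X * V) hAB

/-! ### Twirling -/

/-- The Haar twirl is invariant under conjugation by `V^⊗t`. -/
theorem conj_twirl {N t : ℕ} {G : Set (Op N)} (μ : Measure (Op N)) [IsProbabilityMeasure μ]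
    (hsupp : ∀ᵐ U ∂μ, U ∈ UnitarySym N G) {V : Op N}
    (hinv : Measure.map (fun U => V * U) μ = μ) (L : BigOp N t) :
    tpow t V * twirl t μ L * (tpow t V)ᴴ = twirl t μ L := by
  have : BorelSpace (Op N) := ⟨rfl⟩
  have hcont : ∀ i j, Continuous fun U : Op N => (tpow t U * L * (tpow t U)ᴴ) i j := fun i j =>
    ((continuous_tpow.matrix_mul continuous_const).matrix_mul
      continuous_tpow.matrix_conjTranspose).matrix_elem i j
  have hint : ∀ i j, Integrable (fun U : Op N => (tpow t U * L * (tpow t U)ᴴ) i j) μ := by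
    intro i j
    refine Integrable.of_bound (hcont i j).aestronglyMeasurable (∑ l, ∑ k, ‖L k l‖) ?_
    filter_upwards [hsupp] with U hU
    have hb : ∀ i j, ‖tpow t U i j‖ ≤ 1 := fun i j => by
      simp only [tpow, Matrix.of_apply, norm_prod]
      exact Finset.prod_le_one (fun _ _ => norm_nonneg _)
        fun _ _ => entry_norm_bound_of_unitary hU.1 _ _
    simp only [Matrix.mul_apply, Matrix.conjTranspose_apply, Finset.sum_mul]
    refine (norm_sum_le _ _).trans (Finset.sum_le_sum fun l _ => (norm_sum_le _ _).trans
      (Finset.sum_le_sum fun k _ => ?_))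
    rw [norm_mul, norm_mul, norm_star]
    calc _ ≤ 1 * ‖L k l‖ * 1 := by
          gcongr
          · exact hb _ _
          · exact hb _ _
      _ = _ := by ring
  ext i j
  have hleft : Continuous fun U : Op N => V * U := continuous_const.matrix_mul continuous_id
  have h1 : twirl t μ L i j = ∫ U, (tpow t (V * U) * L * (tpow t (V * U))ᴴ) i j ∂μ := by
    conv_lhs => rw [twirl, Matrix.of_apply, ← hinv]
    exact integral_map hleft.measurable.aemeasurable (hcont i j).aestronglyMeasurable
  have h2 : ∀ U : Op N, (tpow t (V * U) * L * (tpow t (V * U))ᴴ) i j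
      = ∑ l, ∑ k, tpow t V i k * (tpow t U * L * (tpow t U)ᴴ) k l * star (tpow t V j l) := by
    intro U
    have : tpow t (V * U) * L * (tpow t (V * U))ᴴ
        = tpow t V * (tpow t U * L * (tpow t U)ᴴ) * (tpow t V)ᴴ := by
      rw [tpow_mul, Matrix.conjTranspose_mul]; simp only [mul_assoc]
    rw [this, Matrix.mul_apply]
    simp only [Matrix.mul_apply (M := tpow t V), Matrix.conjTranspose_apply, Finset.sum_mul]
  rw [h1]
  simp only [h2]
  rw [integral_finsetSum _ fun l _ => integrable_finsetSum _ fun k _ =>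
    ((hint k l).const_mul _).mul_const _]
  rw [Matrix.mul_apply]
  refine Finset.sum_congr rfl fun l _ => ?_
  rw [integral_finsetSum _ fun k _ => ((hint k l).const_mul _).mul_const _, Matrix.mul_apply,
    Finset.sum_mul]
  refine Finset.sum_congr rfl fun k _ => ?_
  rw [integral_mul_const, integral_const_mul, Matrix.conjTranspose_apply, twirl, Matrix.of_apply]

/-- The twirl fixes operators commuting with `U^⊗t` for almost every `U`. -/
theorem twirl_eq_self {N t : ℕ} (μ : Measure (Op N)) [IsProbabilityMeasure μ] (L : BigOp N t)
    (h : ∀ᵐ U ∂μ, tpow t U * L * (tpow t U)ᴴ = L) : twirl t μ L = L := by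
  ext i j
  rw [twirl, Matrix.of_apply, integral_congr_ae (g := fun _ => L i j)]
  · simp
  · filter_upwards [h] with U hU
    rw [hU]

/-! ### Orthogonally decomposable tensors of order three -/

/-- Contracting the last two tensor factors of `A^⊗3` with `B` and `C`. -/
theorem sum_tpow_three_mul {N : ℕ} (A B C : Op N) (i j : QubitIdx N) :
    ∑ k, ∑ l, ∑ m, ∑ n, tpow 3 A ![i, k, m] ![j, l, n] * B l k * C n m
      = (trace (A * B) * trace (A * C)) * A i j := by
  have hC : ∀ k l, ∑ m, ∑ n, tpow 3 A ![i, k, m] ![j, l, n] * B l k * C n m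
      = (A k l * B l k) * (trace (A * C) * A i j) := by
    intro k l
    simp only [tpow, Matrix.of_apply, Fin.prod_univ_three, Matrix.cons_val, Matrix.trace,
      Matrix.diag, Matrix.mul_apply, Finset.sum_mul, Finset.mul_sum]
    exact Finset.sum_congr rfl fun m _ => Finset.sum_congr rfl fun n _ => by ring
  simp only [hC, ← Finset.sum_mul]
  rw [mul_assoc]
  rfl

theorem sum_trace_smul_eq_of_sum_tpow_eq {N : ℕ} {ι : Type*} {s : Finset ι} {A A' : ι → Op N}
    (h : ∑ p ∈ s, tpow 3 (A p) = ∑ p ∈ s, tpow 3 (A' p)) (B C : Op N) :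
    ∑ p ∈ s, (trace (A p * B) * trace (A p * C)) • A p
      = ∑ p ∈ s, (trace (A' p * B) * trace (A' p * C)) • A' p := by
  have key : ∀ A : ι → Op N, ∀ i j, (∑ p ∈ s, (trace (A p * B) * trace (A p * C)) • A p) i j
      = ∑ k, ∑ l, ∑ m, ∑ n, (∑ p ∈ s, tpow 3 (A p)) ![i, k, m] ![j, l, n] * B l k * C n m := by
    intro A i j
    simp only [Matrix.sum_apply, Matrix.smul_apply, smul_eq_mul, ← sum_tpow_three_mul,
      Finset.sum_mul]
    rw [Finset.sum_comm]; refine Finset.sum_congr rfl fun k _ => ?_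
    rw [Finset.sum_comm]; refine Finset.sum_congr rfl fun l _ => ?_
    rw [Finset.sum_comm]; refine Finset.sum_congr rfl fun m _ => ?_
    rw [Finset.sum_comm]
  ext i j
  rw [key, key, h]

/-- If conjugation by a unitary `W` fixes `∑ p^⊗3` for an orthogonal family of operators `p`,
then it fixes each member it does not make orthogonal to itself. -/
theorem conj_eq_self_of_sum_tpow_eq {N : ℕ} {G : Set (Op N)} {W : Op N}
    (hW : W ∈ UnitarySym N G) {s : Finset (Op N)}
    (hs : ∀ p ∈ s, ∀ q ∈ s, p ≠ q → trace (p * q) = 0) {q : Op N} (hq : q ∈ s)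
    (hqq : trace (q * q) ≠ 0)
    (h : ∑ p ∈ s, tpow 3 (W * p * Wᴴ) = ∑ p ∈ s, tpow 3 p)
    (hne : trace (W * q * Wᴴ * q) ≠ 0) : W * q * Wᴴ = q := by
  have key := sum_trace_smul_eq_of_sum_tpow_eq (A' := fun p => p) h (W * q * Wᴴ) q
  rw [Finset.sum_eq_single_of_mem q hq, Finset.sum_eq_single_of_mem q hq] at key
  · rw [UnitarySym.trace_conj_mul_conj hW, Matrix.trace_mul_comm q (W * q * Wᴴ), mul_comm] at key
    exact smul_right_injective _ (mul_ne_zero hne hqq) key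
  · intro p hp hpq
    rw [hs p hp q hq hpq, mul_zero, zero_smul]
  · intro p hp hpq
    rw [UnitarySym.trace_conj_mul_conj hW, hs p hp q hq hpq, zero_mul, zero_smul]

/-! ### Cayley transform -/

/-- An operator fixed by conjugation with all symmetric unitaries close to the identity commutes
with every Hermitian operator commuting with `G`. -/
theorem commute_of_conj_eq_self {N : ℕ} {G : Set (Op N)} {Q H : Op N} (hQ : trace (Q * Q) ≠ 0)
    (hfix : ∀ W ∈ UnitarySym N G, trace (W * Q * Wᴴ * Q) ≠ 0 → W * Q * Wᴴ = Q)
    (hH : Hᴴ = H) (hHG : ∀ g ∈ G, Commute H g) : Commute H Q := by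
  let B : ℝ → Op N := fun t => 1 - ((t : ℂ) * Complex.I) • H
  have hB : Continuous B := by fun_prop
  have hB0 : B 0 = 1 := by simp [B]
  let W : ℝ → Op N := fun t => (B t)ᴴ * (B t)⁻¹
  have hdet : ∀ᶠ t in nhds (0 : ℝ), (B t).det ≠ 0 :=
    hB.matrix_det.continuousAt.eventually_ne (by simp [hB0])
  have hW : ContinuousAt W 0 := by
    refine hB.matrix_conjTranspose.continuousAt.mul ?_
    simp only [Matrix.inv_def, Ring.inverse_eq_inv']
    exact (hB.matrix_det.continuousAt.inv₀ (by simp [hB0])).smul hB.matrix_adjugate.continuousAt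
  have htr : ∀ᶠ t in nhds (0 : ℝ), trace (W t * Q * (W t)ᴴ * Q) ≠ 0 := by
    have hc : ContinuousAt (fun t => trace (W t * Q * (W t)ᴴ * Q)) 0 := by
      have hf : Continuous fun A : Op N => trace (A * Q * Aᴴ * Q) :=
        (((continuous_id.matrix_mul continuous_const).matrix_mul
          continuous_id.matrix_conjTranspose).matrix_mul continuous_const).matrix_trace
      exact ContinuousAt.comp (f := W) hf.continuousAt hW
    exact hc.eventually_ne (by simpa [W, hB0] using hQ)
  obtain ⟨t, ⟨htdet, httr⟩, ht⟩ : ∃ t : ℝ, ((B t).det ≠ 0 ∧ trace (W t * Q * (W t)ᴴ * Q) ≠ 0)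
      ∧ t ≠ 0 :=
    (((hdet.and htr).filter_mono nhdsWithin_le_nhds).and
      (self_mem_nhdsWithin (s := ({0}ᶜ : Set ℝ)))).exists
  have hu : IsUnit (B t).det := isUnit_iff_ne_zero.mpr htdet
  have huC : IsUnit (B t)ᴴ.det := by rw [Matrix.det_conjTranspose]; exact hu.star
  have hBC : (B t)ᴴ = 2 - B t := by
    simp only [B, Matrix.conjTranspose_sub, Matrix.conjTranspose_one, Matrix.conjTranspose_smul, hH]
    rw [show star ((t : ℂ) * Complex.I) = -((t : ℂ) * Complex.I) by simp, neg_smul,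
      show (2 : Op N) = 1 + 1 from one_add_one_eq_two.symm]
    abel
  have hcomm : Commute (B t)ᴴ (B t) := by
    rw [hBC]; exact (Commute.ofNat_left 2 (B t)).sub_left (Commute.refl _)
  have hinv : ∀ A, Commute (B t) A → Commute (B t)⁻¹ A := by
    intro A hA
    calc (B t)⁻¹ * A = (B t)⁻¹ * (A * B t) * (B t)⁻¹ := by
          rw [mul_assoc, mul_assoc, Matrix.mul_nonsing_inv _ hu, mul_one]
      _ = A * (B t)⁻¹ := by rw [← hA.eq, ← mul_assoc, Matrix.nonsing_inv_mul _ hu, one_mul]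
  have hWmem : W t ∈ UnitarySym N G := by
    refine ⟨Matrix.mem_unitaryGroup_iff'.mpr ?_, fun g hg => ?_⟩
    · rw [Matrix.star_eq_conjTranspose]
      simp only [W, Matrix.conjTranspose_mul, Matrix.conjTranspose_conjTranspose,
        Matrix.conjTranspose_nonsing_inv]
      calc (B t)ᴴ⁻¹ * B t * ((B t)ᴴ * (B t)⁻¹) = (B t)ᴴ⁻¹ * (B t * (B t)ᴴ) * (B t)⁻¹ := by
            simp only [mul_assoc]
        _ = (B t)ᴴ⁻¹ * (B t)ᴴ * (B t * (B t)⁻¹) := by rw [← hcomm.eq]; simp only [mul_assoc]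
        _ = 1 := by rw [Matrix.nonsing_inv_mul _ huC, Matrix.mul_nonsing_inv _ hu, one_mul]
    · have hBg : Commute (B t) g := (Commute.one_left g).sub_left ((hHG g hg).smul_left _)
      have hCg : Commute (B t)ᴴ g := by
        rw [hBC]; exact (Commute.ofNat_left 2 g).sub_left hBg
      exact hCg.mul_left (hinv g hBg)
  have hWQ : Commute (W t) Q := by
    have h := hfix _ hWmem httr
    calc W t * Q = W t * Q * ((W t)ᴴ * W t) := by
          rw [UnitarySym.conjTranspose_mul_self hWmem, mul_one]
      _ = Q * W t := by rw [← mul_assoc, h]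
  have hWB : W t = 2 * (B t)⁻¹ - 1 := by
    simp only [W]
    rw [hBC, sub_mul, Matrix.mul_nonsing_inv _ hu]
  have hBinv : Commute (B t)⁻¹ Q := by
    have h2 : (B t)⁻¹ = (2⁻¹ : ℂ) • (W t + 1) := by
      rw [hWB, sub_add_cancel, two_mul, ← two_smul ℂ, smul_smul]; norm_num
    rw [h2]; exact (hWQ.add_left (Commute.one_left Q)).smul_left _
  have hBQ : Commute (B t) Q := by
    calc B t * Q = B t * (Q * (B t)⁻¹) * B t := by
          rw [mul_assoc, mul_assoc, Matrix.nonsing_inv_mul _ hu, mul_one]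
      _ = Q * B t := by rw [← hBinv.eq, ← mul_assoc, Matrix.mul_nonsing_inv _ hu, one_mul]
  have hHB : H = ((t : ℂ) * Complex.I)⁻¹ • (1 - B t) := by
    have : (t : ℂ) * Complex.I ≠ 0 := mul_ne_zero (by exact_mod_cast ht) Complex.I_ne_zero
    simp only [B, sub_sub_cancel, smul_smul, inv_mul_cancel₀ this, one_smul]
  rw [hHB]; exact ((Commute.one_left Q).sub_left hBQ).smul_left _

/-! ### The orbit of a Pauli operator -/

/-- If the symmetric Cliffords form a 3-design, symmetric unitaries commute with every Pauli
operator occurring in an element of `G`. -/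
theorem commute_pauli_of_design {N : ℕ} {G : Set (Op N)}
    (μC μU : Measure (Op N)) [IsProbabilityMeasure μC] [IsProbabilityMeasure μU]
    (hCsupp : ∀ᵐ U ∂μC, U ∈ CliffordSym N G)
    (hUsupp : ∀ᵐ U ∂μU, U ∈ UnitarySym N G)
    (hUinvL : ∀ V ∈ UnitarySym N G, Measure.map (fun U => V * U) μU = μU)
    (hdesign : ∀ L : BigOp N 3, twirl 3 μC L = twirl 3 μU L)
    {a : Fin N → Fin 4} {g : Op N} (hg : g ∈ G) (hga : trace (g * pauli a) ≠ 0)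
    {U : Op N} (hU : U ∈ UnitarySym N G) : Commute U (pauli a) := by
  set Q : Op N := pauli a with hQdef
  have hQQ : trace (Q * Q) ≠ 0 := by
    rw [hQdef, pauli_mul_self, Matrix.trace_one]
    exact_mod_cast Fintype.card_ne_zero
  have hQmem : Q ∈ PauliGroup N := ⟨1, by simp [phases], a, by simp [hQdef]⟩
  let O : Set (Op N) := {P | ∃ V ∈ CliffordSym N G, V * Q * Vᴴ = P}
  have hOsub : O ⊆ PauliGroup N := by
    rintro _ ⟨V, hV, rfl⟩
    exact hV.1.2 Q hQmem
  have hOtr : ∀ p ∈ O, trace (g * p) = trace (g * Q) := by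
    rintro _ ⟨V, hV, rfl⟩
    exact UnitarySym.trace_mul_conj hV.2 hg Q
  have hOfin : O.Finite := (pauliGroup_finite N).subset hOsub
  let s : Finset (Op N) := hOfin.toFinset
  have hs : ∀ p, p ∈ s ↔ p ∈ O := fun p => hOfin.mem_toFinset
  have hQs : Q ∈ s := (hs Q).mpr ⟨1, CliffordSym.one_mem, by simp⟩
  have horth : ∀ p ∈ s, ∀ q ∈ s, p ≠ q → trace (p * q) = 0 := by
    intro p hp q hq hpq
    rw [hs] at hp hq
    have hp' := hOtr p hp
    have hq' := hOtr q hq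
    obtain ⟨c, -, b, rfl⟩ := hOsub hp
    obtain ⟨d, -, b', rfl⟩ := hOsub hq
    rcases eq_or_ne b b' with rfl | hb
    · have h := hp'.trans hq'.symm
      have hne : trace (g * pauli b) ≠ 0 := by
        intro h0
        rw [Matrix.mul_smul, Matrix.trace_smul, h0, smul_zero] at hp'
        exact hga hp'.symm
      simp only [Matrix.mul_smul, Matrix.trace_smul, smul_eq_mul] at h
      exact absurd (by rw [mul_right_cancel₀ hne h]) hpq
    · rw [Matrix.smul_mul, Matrix.mul_smul, Matrix.trace_smul, Matrix.trace_smul,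
        trace_pauli_mul_pauli_of_ne hb, smul_zero, smul_zero]
  have hconj : ∀ V, tpow 3 V * (∑ p ∈ s, tpow 3 p) * (tpow 3 V)ᴴ
      = ∑ p ∈ s, tpow 3 (V * p * Vᴴ) := by
    intro V
    simp only [Finset.mul_sum, Finset.sum_mul, tpow_mul, tpow_conjTranspose]
  have hClifford : ∀ V ∈ CliffordSym N G,
      tpow 3 V * (∑ p ∈ s, tpow 3 p) * (tpow 3 V)ᴴ = ∑ p ∈ s, tpow 3 p := by
    intro V hV
    have himage : s.image (fun p => V * p * Vᴴ) = s := by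
      refine Finset.eq_of_subset_of_card_le ?_
        (Finset.card_image_of_injective s (UnitarySym.conj_injective hV.2)).ge
      intro _ hp
      obtain ⟨p, hps, rfl⟩ := Finset.mem_image.mp hp
      obtain ⟨V', hV', rfl⟩ := (hs p).mp hps
      exact (hs _).mpr ⟨V * V', CliffordSym.mul_mem hV hV', by
        simp only [Matrix.conjTranspose_mul, mul_assoc]⟩
    rw [hconj]
    conv_rhs => rw [← himage, Finset.sum_image (UnitarySym.conj_injective hV.2).injOn]
  have htwirl : twirl 3 μU (∑ p ∈ s, tpow 3 p) = ∑ p ∈ s, tpow 3 p := by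
    rw [← hdesign]
    exact twirl_eq_self μC _ (hCsupp.mono hClifford)
  have hfix : ∀ W ∈ UnitarySym N G, trace (W * Q * Wᴴ * Q) ≠ 0 → W * Q * Wᴴ = Q := by
    intro W hW hne
    refine conj_eq_self_of_sum_tpow_eq hW horth hQs hQQ ?_ hne
    have h := conj_twirl μU hUsupp (hUinvL W hW) (∑ p ∈ s, tpow 3 p)
    rwa [htwirl, hconj] at h
  have hre : Commute (U + Uᴴ) Q :=
    commute_of_conj_eq_self hQQ hfix (by simp [add_comm])
      fun g hg => Commute.add_left (hU.2 g hg) (UnitarySym.conjTranspose_commute hU hg)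
  have him : Commute (Complex.I • (U - Uᴴ)) Q :=
    commute_of_conj_eq_self hQQ hfix
      (by simp [Matrix.conjTranspose_smul, ← smul_neg])
      fun g hg => (Commute.sub_left (hU.2 g hg) (UnitarySym.conjTranspose_commute hU hg)).smul_left _
  have hdecomp : U = (2⁻¹ : ℂ) • ((U + Uᴴ) - Complex.I • (Complex.I • (U - Uᴴ))) := by
    rw [smul_smul, Complex.I_mul_I]
    module
  rw [hdecomp]
  exact (hre.sub_left (him.smul_left _)).smul_left _


/-- if `C_{N,G}` is a `G`-symmetric unitary 3-design, then `U_{N,G}` equals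
the commutant of the Pauli subgroup `Q` generated by the unsigned Paulis appearing in
some element of `G` with nonzero coefficient. -/
theorem stmt8 {N : ℕ} (G : Set (Op N)) (hG : IsUnitarySubgroup G)
    (μC μU : Measure (Op N)) [IsProbabilityMeasure μC] [IsProbabilityMeasure μU]
    (hCsupp : ∀ᵐ U ∂μC, U ∈ CliffordSym N G)
    (hUsupp : ∀ᵐ U ∂μU, U ∈ UnitarySym N G)
    (hCinvL : ∀ V ∈ CliffordSym N G, Measure.map (fun U => V * U) μC = μC)
    (hCinvR : ∀ V ∈ CliffordSym N G, Measure.map (fun U => U * V) μC = μC)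
    (hUinvL : ∀ V ∈ UnitarySym N G, Measure.map (fun U => V * U) μU = μU)
    (hUinvR : ∀ V ∈ UnitarySym N G, Measure.map (fun U => U * V) μU = μU)
    (hdesign : ∀ L : BigOp N 3, twirl 3 μC L = twirl 3 μU L) :
    UnitarySym N G =
      UnitarySym N
        (Submonoid.closure
          {P : Op N | ∃ a : Fin N → Fin 4, P = pauli a ∧
            ∃ g ∈ G, Matrix.trace (g * pauli a) ≠ 0} : Set (Op N)) := by
  ext U
  constructor
  · intro hU
    refine ⟨hU.1, fun P hP => ?_⟩
    suffices h : Commute U P from h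
    induction hP using Submonoid.closure_induction with
    | mem P hP =>
      obtain ⟨a, rfl, g, hg, hga⟩ := hP
      exact commute_pauli_of_design μC μU hCsupp hUsupp hUinvL hdesign hg hga hU
    | one => exact Commute.one_right U
    | mul P P' _ _ h h' => exact h.mul_right h'
  · rintro ⟨hU, hcomm⟩
    refine ⟨hU, fun g hg => ?_⟩
    suffices h : Commute U ((2 ^ N : ℂ) • g) by
      have h2 := h.smul_right (2 ^ N : ℂ)⁻¹
      rwa [smul_smul, inv_mul_cancel₀ (pow_ne_zero N two_ne_zero), one_smul] at h2
    rw [← sum_trace_smul_pauli]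
    refine Commute.sum_right _ _ _ fun a _ => ?_
    by_cases hga : trace (g * pauli a) = 0
    · rw [hga, zero_smul]
      exact Commute.zero_right U
    · exact Commute.smul_right (hcomm _ (Submonoid.subset_closure ⟨a, rfl, g, hg, hga⟩)) _
end

section
/- Let Q be any subgroup of the Pauli group on n qubits. Then there exists a Clifford operator W and nonnegative integers n₁, n₂, n₃ with n₁ + n₂ + n₃ = n such that {±1,±i}·W Q W† = {±1,±i}·({I,X,Y,Z}^⊗n₁ ⊗ {I,Z}^⊗n₂ ⊗ {I}^⊗n₃), i.e., up to phases every Pauli subgroup is Clifford-equivalent to a standard form consisting of a full Pauli block, a diagonal Z block, and a trivial block. -/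
open Matrix MeasureTheory

/-! ### Phases -/

theorem mem_phases_iff {c : ℂ} : c ∈ phases ↔ c ^ 4 = 1 := by
  have h : c ^ 4 - 1 = (c - 1) * (c + 1) * ((c - Complex.I) * (c + Complex.I)) := by
    linear_combination (c ^ 2 - 1) * Complex.I_sq
  rw [← sub_eq_zero, h]
  simp only [phases, Set.mem_insert_iff, Set.mem_singleton_iff, mul_eq_zero, sub_eq_zero,
    add_eq_zero_iff_eq_neg]
  tauto

theorem one_mem_phases : (1 : ℂ) ∈ phases := by simp [mem_phases_iff]

theorem I_mem_phases : Complex.I ∈ phases := by simp [phases]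

theorem mul_mem_phases {c d : ℂ} (hc : c ∈ phases) (hd : d ∈ phases) : c * d ∈ phases := by
  rw [mem_phases_iff] at *
  rw [mul_pow, hc, hd, one_mul]

theorem inv_mem_phases {c : ℂ} (hc : c ∈ phases) : c⁻¹ ∈ phases := by
  rw [mem_phases_iff] at *
  rw [inv_pow, hc, inv_one]

theorem neg_mem_phases {c : ℂ} (hc : c ∈ phases) : -c ∈ phases := by
  rw [mem_phases_iff] at *
  rw [← hc]
  ring

theorem ne_zero_of_mem_phases {c : ℂ} (hc : c ∈ phases) : c ≠ 0 := by
  rintro rfl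
  simp [mem_phases_iff] at hc

theorem prod_mem_phases {ι : Type*} [Fintype ι] {c : ι → ℂ} (hc : ∀ i, c i ∈ phases) :
    ∏ i, c i ∈ phases := by
  simp only [mem_phases_iff] at *
  simp [← Finset.prod_pow, hc]

/-! ### Tensor products of single-qubit operators -/

/-- The Kronecker product of the single-qubit operators `A k`. -/
def qubitTensor {n : ℕ} (A : Fin n → Matrix (Fin 2) (Fin 2) ℂ) : Op n :=
  Matrix.of fun i j => ∏ k, A k (i k) (j k)

theorem qubitTensor_mul {n : ℕ} (A B : Fin n → Matrix (Fin 2) (Fin 2) ℂ) :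
    qubitTensor A * qubitTensor B = qubitTensor fun k => A k * B k := by
  ext i j
  simp only [qubitTensor, Matrix.mul_apply, Matrix.of_apply, Finset.prod_univ_sum,
    Fintype.piFinset_univ, Finset.prod_mul_distrib]

theorem qubitTensor_smul {n : ℕ} (c : Fin n → ℂ) (A : Fin n → Matrix (Fin 2) (Fin 2) ℂ) :
    (qubitTensor fun k => c k • A k) = (∏ k, c k) • qubitTensor A := by
  ext i j
  simp [qubitTensor, Finset.prod_mul_distrib]

theorem qubitTensor_conjTranspose {n : ℕ} (A : Fin n → Matrix (Fin 2) (Fin 2) ℂ) :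
    (qubitTensor A)ᴴ = qubitTensor fun k => (A k)ᴴ := by
  ext i j
  simp [qubitTensor, Matrix.conjTranspose_apply]

theorem qubitTensor_one {n : ℕ} :
    qubitTensor (fun _ : Fin n => (1 : Matrix (Fin 2) (Fin 2) ℂ)) = 1 := by
  ext i j
  by_cases h : i = j
  · subst h
    simp [qubitTensor]
  · obtain ⟨k, hk⟩ := Function.ne_iff.mp h
    rw [Matrix.one_apply_ne h]
    exact Finset.prod_eq_zero (Finset.mem_univ k) (Matrix.one_apply_ne hk)

/-! ### Single-qubit Pauli operators in binary symplectic coordinates -/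

/-- The label of the single-qubit Pauli operator `X ^ x.1 * Z ^ x.2`, up to phase. -/
def pauliCode (x : ZMod 2 × ZMod 2) : Fin 4 :=
  if x.1 = 0 then (if x.2 = 0 then 0 else 3) else (if x.2 = 0 then 1 else 2)

theorem pauliCode_surjective : Function.Surjective pauliCode := by decide

theorem pauliCode_eq_zero_iff : ∀ {x : ZMod 2 × ZMod 2}, pauliCode x = 0 ↔ x = 0 := by decide

theorem pauliCode_eq_zero_or_three_iff :
    ∀ {x : ZMod 2 × ZMod 2}, (pauliCode x = 0 ∨ pauliCode x = 3) ↔ x.1 = 0 := by decide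

theorem ZMod.two_eq_zero_or_one : ∀ x : ZMod 2, x = 0 ∨ x = 1 := by decide

/-- The sign `(-1) ^ x`. -/
def binarySign : AddChar (ZMod 2) ℂ where
  toFun x := if x = 0 then 1 else -1
  map_zero_eq_one' := by simp
  map_add_eq_mul' x y := by
    rcases ZMod.two_eq_zero_or_one x with rfl | rfl <;>
    rcases ZMod.two_eq_zero_or_one y with rfl | rfl <;> simp [show (1 : ZMod 2) + 1 = 0 from rfl]

theorem binarySign_one : binarySign 1 = -1 := by simp [binarySign]

theorem binarySign_sum {ι : Type*} (s : Finset ι) (f : ι → ZMod 2) :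
    binarySign (∑ i ∈ s, f i) = ∏ i ∈ s, binarySign (f i) := by
  classical
  induction s using Finset.induction_on with
  | empty => simp
  | insert i s hi ih =>
    rw [Finset.sum_insert hi, Finset.prod_insert hi, AddChar.map_add_eq_mul, ih]

theorem σ1_conjTranspose (a : Fin 4) : (σ1 a)ᴴ = σ1 a := by
  fin_cases a <;> ext i j <;> fin_cases i <;> fin_cases j <;> simp [σ1]

theorem σ1_mul (x y : ZMod 2 × ZMod 2) :
    ∃ c ∈ phases, σ1 (pauliCode x) * σ1 (pauliCode y) = c • σ1 (pauliCode (x + y)) := by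
  have key : ∀ a b : Fin 4, ∃ c ∈ phases, σ1 a * σ1 b = c • σ1 (a ^^^ b) := by
    intro a b
    fin_cases a <;> fin_cases b <;>
    first
    | refine ⟨1, by simp [phases], ?_⟩
      ext i j
      fin_cases i <;> fin_cases j <;> simp [σ1] <;> done
    | refine ⟨Complex.I, by simp [phases], ?_⟩
      ext i j
      fin_cases i <;> fin_cases j <;> simp [σ1] <;> done
    | refine ⟨-Complex.I, by simp [phases], ?_⟩
      ext i j
      fin_cases i <;> fin_cases j <;> simp [σ1]
  have hcode : ∀ x y, pauliCode (x + y) = pauliCode x ^^^ pauliCode y := by decide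
  rw [hcode]
  exact key _ _

theorem σ1_mul_comm (x y : ZMod 2 × ZMod 2) :
    σ1 (pauliCode x) * σ1 (pauliCode y) =
      binarySign (x.1 * y.2 + x.2 * y.1) • (σ1 (pauliCode y) * σ1 (pauliCode x)) := by
  obtain ⟨x₁, x₂⟩ := x
  obtain ⟨y₁, y₂⟩ := y
  rcases ZMod.two_eq_zero_or_one x₁ with rfl | rfl <;>
  rcases ZMod.two_eq_zero_or_one x₂ with rfl | rfl <;>
  rcases ZMod.two_eq_zero_or_one y₁ with rfl | rfl <;>
  rcases ZMod.two_eq_zero_or_one y₂ with rfl | rfl <;>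
    (ext i j; fin_cases i <;> fin_cases j <;>
      simp [σ1, pauliCode, binarySign, show (1 : ZMod 2) + 1 = 0 from rfl])

/-! ### Pauli operators in binary symplectic coordinates -/

/-- Binary symplectic coordinates of `n`-qubit Pauli operators. -/
abbrev BinVec (n : ℕ) := Fin n → ZMod 2 × ZMod 2

/-- The symplectic form on binary coordinates. -/
def sympForm (n : ℕ) : BinVec n →ₗ[ZMod 2] BinVec n →ₗ[ZMod 2] ZMod 2 :=
  LinearMap.mk₂ (ZMod 2) (fun u v => ∑ k, ((u k).1 * (v k).2 + (u k).2 * (v k).1))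
    (fun u u' v => by
      rw [← Finset.sum_add_distrib]
      exact Finset.sum_congr rfl fun k _ => by
        simp only [Pi.add_apply, Prod.fst_add, Prod.snd_add]; ring)
    (fun c u v => by
      rw [Finset.smul_sum]
      exact Finset.sum_congr rfl fun k _ => by
        simp only [Pi.smul_apply, Prod.smul_fst, Prod.smul_snd, smul_eq_mul]; ring)
    (fun u v v' => by
      rw [← Finset.sum_add_distrib]
      exact Finset.sum_congr rfl fun k _ => by
        simp only [Pi.add_apply, Prod.fst_add, Prod.snd_add]; ring)
    (fun c u v => by
      rw [Finset.smul_sum]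
      exact Finset.sum_congr rfl fun k _ => by
        simp only [Pi.smul_apply, Prod.smul_fst, Prod.smul_snd, smul_eq_mul]; ring)

section Symplectic

variable {n : ℕ}

theorem sympForm_apply (u v : BinVec n) :
    sympForm n u v = ∑ k, ((u k).1 * (v k).2 + (u k).2 * (v k).1) := rfl

theorem sympForm_comm (u v : BinVec n) : sympForm n u v = sympForm n v u := by
  simp only [sympForm_apply]
  exact Finset.sum_congr rfl fun k _ => by ring

theorem sympForm_self (u : BinVec n) : sympForm n u u = 0 := by
  rw [sympForm_apply]
  refine Finset.sum_eq_zero fun k _ => ?_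
  rw [mul_comm (u k).2]
  exact CharTwo.add_self_eq_zero _

theorem sympForm_single (u : BinVec n) (k : Fin n) (x : ZMod 2 × ZMod 2) :
    sympForm n u (Pi.single k x) = (u k).1 * x.2 + (u k).2 * x.1 := by
  rw [sympForm_apply, Finset.sum_eq_single k]
  · simp
  · intro b _ hb
    simp [Pi.single_eq_of_ne hb]
  · simp

/-- The unsigned Pauli operator with the given binary coordinates. -/
noncomputable def binPauli (v : BinVec n) : Op n := pauli fun k => pauliCode (v k)

theorem binPauli_eq_qubitTensor (v : BinVec n) :
    binPauli v = qubitTensor fun k => σ1 (pauliCode (v k)) := rfl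

theorem exists_binPauli_eq (a : Fin n → Fin 4) :
    ∃ v : BinVec n, (∀ k, pauliCode (v k) = a k) ∧ binPauli v = pauli a := by
  choose v hv using fun k => pauliCode_surjective (a k)
  exact ⟨v, hv, by simp only [binPauli, hv]⟩

theorem binPauli_zero : binPauli (0 : BinVec n) = 1 :=
  qubitTensor_one

theorem binPauli_conjTranspose (v : BinVec n) : (binPauli v)ᴴ = binPauli v := by
  simp only [binPauli_eq_qubitTensor, qubitTensor_conjTranspose, σ1_conjTranspose]

theorem binPauli_mul_self (v : BinVec n) : binPauli v * binPauli v = 1 := by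
  simp only [binPauli_eq_qubitTensor, qubitTensor_mul, σ1_mul_self, qubitTensor_one]

theorem binPauli_mul (u v : BinVec n) :
    ∃ c ∈ phases, binPauli u * binPauli v = c • binPauli (u + v) := by
  choose c hc h using fun k => σ1_mul (u k) (v k)
  refine ⟨∏ k, c k, prod_mem_phases hc, ?_⟩
  simp only [binPauli_eq_qubitTensor, qubitTensor_mul, h, qubitTensor_smul, Pi.add_apply]

theorem binPauli_mul_comm (u v : BinVec n) :
    binPauli u * binPauli v = binarySign (sympForm n u v) • (binPauli v * binPauli u) := by
  rw [sympForm_apply, binarySign_sum]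
  simp only [binPauli_eq_qubitTensor, qubitTensor_mul]
  rw [← qubitTensor_smul]
  simp only [← σ1_mul_comm]

/-! ### Symplectic maps implemented by Clifford operators -/

/-- The unitary `W` acts by conjugation on Pauli operators, up to phases, as `g` does on their
binary coordinates. -/
def Implements (W : Op n) (g : BinVec n →ₗ[ZMod 2] BinVec n) : Prop :=
  W ∈ Matrix.unitaryGroup (QubitIdx n) ℂ ∧
    ∀ v, ∃ c ∈ phases, W * binPauli v * Wᴴ = c • binPauli (g v)

theorem Implements.isClifford {W : Op n} {g : BinVec n →ₗ[ZMod 2] BinVec n}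
    (h : Implements W g) : IsClifford W := by
  refine ⟨h.1, ?_⟩
  rintro _ ⟨c, hc, a, rfl⟩
  obtain ⟨v, -, hv⟩ := exists_binPauli_eq a
  obtain ⟨d, hd, hW⟩ := h.2 v
  refine ⟨c * d, mul_mem_phases hc hd, fun k => pauliCode (g v k), ?_⟩
  rw [← hv, Matrix.mul_smul, Matrix.smul_mul, hW, smul_smul]
  rfl

theorem Implements.id : Implements (1 : Op n) LinearMap.id :=
  ⟨one_mem _, fun v => ⟨1, one_mem_phases, by simp⟩⟩

theorem Implements.comp {W₁ W₂ : Op n} {g₁ g₂ : BinVec n →ₗ[ZMod 2] BinVec n}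
    (h₁ : Implements W₁ g₁) (h₂ : Implements W₂ g₂) : Implements (W₁ * W₂) (g₁ ∘ₗ g₂) := by
  refine ⟨mul_mem h₁.1 h₂.1, fun v => ?_⟩
  obtain ⟨c, hc, hcv⟩ := h₂.2 v
  obtain ⟨d, hd, hdv⟩ := h₁.2 (g₂ v)
  refine ⟨c * d, mul_mem_phases hc hd, ?_⟩
  calc W₁ * W₂ * binPauli v * (W₁ * W₂)ᴴ = W₁ * (W₂ * binPauli v * W₂ᴴ) * W₁ᴴ := by
        simp only [Matrix.conjTranspose_mul, Matrix.mul_assoc]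
    _ = (c * d) • binPauli ((g₁ ∘ₗ g₂) v) := by
        rw [hcv, Matrix.mul_smul, Matrix.smul_mul, hdv, smul_smul]; rfl

/-- The symplectic transvection along `v`. -/
def sympTransvection (v : BinVec n) : BinVec n →ₗ[ZMod 2] BinVec n :=
  LinearMap.transvection ((sympForm n).flip v) v

theorem sympTransvection_apply (v u : BinVec n) :
    sympTransvection v u = u + sympForm n u v • v := rfl

theorem exists_implements_sympTransvection (v : BinVec n) :
    ∃ W, Implements W (sympTransvection v) := by
  set r : ℂ := ((√2 : ℝ) : ℂ)⁻¹
  have hr : r * r = 1 / 2 := by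
    rw [← mul_inv, ← Complex.ofReal_mul, Real.mul_self_sqrt (by norm_num)]
    norm_num
  have hr' : star r = r := by simp [r]
  have hsq := binPauli_mul_self v
  have hstar : (r • (1 + Complex.I • binPauli v))ᴴ = r • (1 - Complex.I • binPauli v) := by
    simp [Matrix.conjTranspose_smul, binPauli_conjTranspose, hr', sub_eq_add_neg]
  have hunit : (r • (1 + Complex.I • binPauli v)) * (r • (1 - Complex.I • binPauli v)) = 1 := by
    rw [smul_mul_smul_comm, hr]
    simp only [mul_sub, add_mul, one_mul, mul_one, smul_mul_smul_comm, hsq, Complex.I_mul_I]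
    module
  refine ⟨r • (1 + Complex.I • binPauli v), ?_, fun u => ?_⟩
  · rw [Matrix.mem_unitaryGroup_iff, Matrix.star_eq_conjTranspose, hstar, hunit]
  · have hcomm := binPauli_mul_comm u v
    rw [hstar, sympTransvection_apply]
    rcases ZMod.two_eq_zero_or_one (sympForm n u v) with h | h
    · rw [h, AddChar.map_zero_eq_one, one_smul] at hcomm
      refine ⟨1, one_mem_phases, ?_⟩
      have : (r • (1 + Complex.I • binPauli v)) * binPauli u =
          binPauli u * (r • (1 + Complex.I • binPauli v)) := by
        simp [mul_add, add_mul, hcomm]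
      rw [this, mul_assoc, hunit, h]
      simp
    · rw [h, binarySign_one] at hcomm
      obtain ⟨c, hc, huv⟩ := binPauli_mul u v
      refine ⟨-Complex.I * c, mul_mem_phases (neg_mem_phases I_mem_phases) hc, ?_⟩
      have hanti : binPauli v * binPauli u = -(binPauli u * binPauli v) := by
        rw [hcomm]; simp
      have : (r • (1 + Complex.I • binPauli v)) * binPauli u =
          binPauli u * (r • (1 - Complex.I • binPauli v)) := by
        simp only [Matrix.smul_mul, Matrix.mul_smul, mul_sub, add_mul, hanti, one_mul, mul_one]
        module
      rw [this, mul_assoc, smul_mul_smul_comm, hr, h, one_smul, mul_smul, ← huv]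
      simp only [mul_sub, sub_mul, one_mul, mul_one, smul_mul_smul_comm, hsq, Complex.I_mul_I,
        Matrix.mul_smul]
      module

/-- Coordinate vectors vanishing on qubits before `k`, without `X` component from qubit `l` on,
and without `Z` component from qubit `m` on. -/
def stdSubspace (n k l m : ℕ) : Submodule (ZMod 2) (BinVec n) where
  carrier := {v | ∀ i : Fin n, ((i : ℕ) < k → v i = 0) ∧ (l ≤ i → (v i).1 = 0) ∧
    (m ≤ i → (v i).2 = 0)}
  zero_mem' i := by simp
  add_mem' {u v} hu hv i := by
    refine ⟨fun h => ?_, fun h => ?_, fun h => ?_⟩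
    · simp [(hu i).1 h, (hv i).1 h]
    · simp [(hu i).2.1 h, (hv i).2.1 h]
    · simp [(hu i).2.2 h, (hv i).2.2 h]
  smul_mem' c v hv i := by
    refine ⟨fun h => ?_, fun h => ?_, fun h => ?_⟩
    · simp [(hv i).1 h]
    · simp [(hv i).2.1 h]
    · simp [(hv i).2.2 h]

theorem mem_stdSubspace {k l m : ℕ} {v : BinVec n} :
    v ∈ stdSubspace n k l m ↔ ∀ i : Fin n, ((i : ℕ) < k → v i = 0) ∧ (l ≤ i → (v i).1 = 0) ∧
      (m ≤ i → (v i).2 = 0) := Iff.rfl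

/-- Coordinate vectors supported on the qubits from `k` on. -/
abbrev tailSubspace (n k : ℕ) : Submodule (ZMod 2) (BinVec n) := stdSubspace n k n n

theorem mem_tailSubspace {k : ℕ} {v : BinVec n} :
    v ∈ tailSubspace n k ↔ ∀ i : Fin n, (i : ℕ) < k → v i = 0 :=
  forall_congr' fun i => by simp [i.isLt.not_ge]

theorem tailSubspace_antitone {k l : ℕ} (h : k ≤ l) : tailSubspace n l ≤ tailSubspace n k :=
  fun _ hv => mem_tailSubspace.mpr fun i hi => mem_tailSubspace.mp hv i (hi.trans_le h)

theorem single_mem_tailSubspace (k : Fin n) (x : ZMod 2 × ZMod 2) :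
    Pi.single k x ∈ tailSubspace n k :=
  mem_tailSubspace.mpr fun _ hi =>
    Pi.single_eq_of_ne (M := fun _ => ZMod 2 × ZMod 2) (Fin.ne_of_lt hi) x

/-- A symplectic map that is implemented by a Clifford operator and acts only on the qubits
from `k` on. -/
structure IsTailClifford (k : ℕ) (g : BinVec n →ₗ[ZMod 2] BinVec n) : Prop where
  implemented : ∃ W, Implements W g
  isometry : ∀ u v, sympForm n (g u) (g v) = sympForm n u v
  sub_mem : ∀ v, g v - v ∈ tailSubspace n k
  fixes : ∀ v, (∀ i : Fin n, k ≤ i → v i = 0) → g v = v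

namespace IsTailClifford

theorem id (k : ℕ) : IsTailClifford k (LinearMap.id : BinVec n →ₗ[ZMod 2] BinVec n) :=
  ⟨⟨1, Implements.id⟩, fun _ _ => rfl, fun v => by simp, fun _ _ => rfl⟩

theorem comp {k : ℕ} {g h : BinVec n →ₗ[ZMod 2] BinVec n} (hg : IsTailClifford k g)
    (hh : IsTailClifford k h) : IsTailClifford k (g ∘ₗ h) := by
  obtain ⟨W₁, hW₁⟩ := hg.implemented
  obtain ⟨W₂, hW₂⟩ := hh.implemented
  refine ⟨⟨_, hW₁.comp hW₂⟩, fun u v => ?_, fun v => ?_, fun v hv => ?_⟩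
  · simp [hg.isometry, hh.isometry]
  · simpa using add_mem (hg.sub_mem (h v)) (hh.sub_mem v)
  · simp [hh.fixes v hv, hg.fixes v hv]

theorem mono {k l : ℕ} (hkl : k ≤ l) {g : BinVec n →ₗ[ZMod 2] BinVec n}
    (hg : IsTailClifford l g) : IsTailClifford k g :=
  ⟨hg.implemented, hg.isometry, fun v => tailSubspace_antitone hkl (hg.sub_mem v),
    fun v hv => hg.fixes v fun i hi => hv i (hkl.trans hi)⟩

theorem map_mem {k : ℕ} {g : BinVec n →ₗ[ZMod 2] BinVec n} (hg : IsTailClifford k g)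
    {v : BinVec n} (hv : v ∈ tailSubspace n k) : g v ∈ tailSubspace n k := by
  simpa using add_mem (hg.sub_mem v) hv

theorem transvection {k : ℕ} {v : BinVec n} (hv : v ∈ tailSubspace n k) :
    IsTailClifford k (sympTransvection v) := by
  refine ⟨exists_implements_sympTransvection v, fun u w => ?_, fun u => ?_, fun u hu => ?_⟩
  · simp only [sympTransvection_apply, map_add, map_smul, LinearMap.add_apply,
      LinearMap.smul_apply, sympForm_self, smul_eq_mul, mul_zero, add_zero, sympForm_comm v w]
    linear_combination CharTwo.add_self_eq_zero (sympForm n u v * sympForm n w v)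
  · rw [sympTransvection_apply, add_sub_cancel_left]
    exact Submodule.smul_mem _ _ hv
  · have : sympForm n u v = 0 := by
      rw [sympForm_apply]
      refine Finset.sum_eq_zero fun i _ => ?_
      rcases lt_or_ge (i : ℕ) k with h | h
      · simp [mem_tailSubspace.mp hv i h]
      · simp [hu i h]
    rw [sympTransvection_apply, this, zero_smul, add_zero]

end IsTailClifford

/-! ### Transitivity -/

theorem ZMod.two_eq_one_of_ne_zero : ∀ {x : ZMod 2}, x ≠ 0 → x = 1 := by decide

theorem sympTransvection_add_left {u v : BinVec n} (h : sympForm n u v = 1) :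
    sympTransvection (u + v) u = v := by
  rw [sympTransvection_apply, map_add, sympForm_self, h, zero_add, one_smul, ← add_assoc,
    ZModModule.add_self, zero_add]

theorem exists_sympForm_eq_one {k : ℕ} {u : BinVec n} (hu : u ∈ tailSubspace n k) (h0 : u ≠ 0) :
    ∃ w ∈ tailSubspace n k, sympForm n u w = 1 := by
  obtain ⟨i, hi⟩ := Function.ne_iff.mp h0
  have hki : k ≤ i := by
    by_contra! h
    exact hi (mem_tailSubspace.mp hu i h)
  obtain ⟨x, hx⟩ := (by decide : ∀ y : ZMod 2 × ZMod 2, y ≠ 0 → ∃ x : ZMod 2 × ZMod 2,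
    y.1 * x.2 + y.2 * x.1 = 1) (u i) hi
  exact ⟨Pi.single i x, tailSubspace_antitone hki (single_mem_tailSubspace i x),
    (sympForm_single u i x).trans hx⟩

theorem exists_common_sympForm_eq_one {k : ℕ} {u v : BinVec n} (hu : u ∈ tailSubspace n k)
    (hv : v ∈ tailSubspace n k) (hu0 : u ≠ 0) (hv0 : v ≠ 0) :
    ∃ w ∈ tailSubspace n k, sympForm n u w = 1 ∧ sympForm n v w = 1 := by
  obtain ⟨w₁, hw₁, h₁⟩ := exists_sympForm_eq_one hu hu0
  obtain ⟨w₂, hw₂, h₂⟩ := exists_sympForm_eq_one hv hv0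
  by_cases h₁' : sympForm n v w₁ = 0
  · by_cases h₂' : sympForm n u w₂ = 0
    · exact ⟨w₁ + w₂, add_mem hw₁ hw₂, by simp [h₁, h₂'], by simp [h₂, h₁']⟩
    · exact ⟨w₂, hw₂, ZMod.two_eq_one_of_ne_zero h₂', h₂⟩
  · exact ⟨w₁, hw₁, h₁, ZMod.two_eq_one_of_ne_zero h₁'⟩

theorem exists_isTailClifford_map_eq {k : ℕ} {u v : BinVec n} (hu : u ∈ tailSubspace n k)
    (hv : v ∈ tailSubspace n k) (hu0 : u ≠ 0) (hv0 : v ≠ 0) :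
    ∃ g, IsTailClifford k g ∧ g u = v := by
  obtain ⟨w, hw, huw, hvw⟩ := exists_common_sympForm_eq_one hu hv hu0 hv0
  refine ⟨sympTransvection (w + v) ∘ₗ sympTransvection (u + w),
    (IsTailClifford.transvection (add_mem hw hv)).comp
      (IsTailClifford.transvection (add_mem hu hw)), ?_⟩
  rw [LinearMap.comp_apply, sympTransvection_add_left huw,
    sympTransvection_add_left (by rw [sympForm_comm, hvw])]

theorem exists_isTailClifford_fix_map_eq {k : ℕ} {e u v : BinVec n} (he : e ∈ tailSubspace n k)
    (hu : u ∈ tailSubspace n k) (hv : v ∈ tailSubspace n k) (heu : sympForm n e u = 1)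
    (hev : sympForm n e v = 1) : ∃ g, IsTailClifford k g ∧ g e = e ∧ g u = v := by
  have of_eq_one : ∀ u ∈ tailSubspace n k, sympForm n e u = 1 → sympForm n u v = 1 →
      ∃ g, IsTailClifford k g ∧ g e = e ∧ g u = v := fun u hu heu huv =>
    ⟨_, IsTailClifford.transvection (add_mem hu hv), by
      rw [sympTransvection_apply, map_add, heu, hev, CharTwo.add_self_eq_zero, zero_smul,
        add_zero], sympTransvection_add_left huv⟩
  by_cases huv : sympForm n u v = 0
  · obtain ⟨g, hg, hge, hgu⟩ := of_eq_one (u + e) (add_mem hu he) (by simp [heu, sympForm_self])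
      (by simp [huv, hev])
    refine ⟨g ∘ₗ sympTransvection e, hg.comp (IsTailClifford.transvection he), ?_, ?_⟩
    · rw [LinearMap.comp_apply, sympTransvection_apply, sympForm_self, zero_smul, add_zero, hge]
    · rw [LinearMap.comp_apply, sympTransvection_apply, sympForm_comm, heu, one_smul, hgu]
  · exact of_eq_one u hu heu (ZMod.two_eq_one_of_ne_zero huv)

theorem exists_isTailClifford_map_pair (k : Fin n) {u v : BinVec n}
    (hu : u ∈ tailSubspace n k) (hv : v ∈ tailSubspace n k) (huv : sympForm n u v = 1) :
    ∃ g, IsTailClifford k g ∧ g u = Pi.single k (0, 1) ∧ g v = Pi.single k (1, 0) := by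
  have hu0 : u ≠ 0 := by
    rintro rfl
    simp at huv
  obtain ⟨g, hg, hgu⟩ := exists_isTailClifford_map_eq hu (single_mem_tailSubspace k (0, 1)) hu0
    (by simp)
  obtain ⟨h, hh, hhe, hhv⟩ := exists_isTailClifford_fix_map_eq
    (single_mem_tailSubspace k (0, 1)) (hg.map_mem hv) (single_mem_tailSubspace k (1, 0))
    (by rw [← hgu, hg.isometry, huv]) (by simp [sympForm_single])
  exact ⟨h ∘ₗ g, hh.comp hg, by simp [hgu, hhe], by simp [hhv]⟩

/-! ### Reduction of subspaces to standard form -/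

theorem sub_single_mem_tailSubspace (k : Fin n) {v : BinVec n} (hv : v ∈ tailSubspace n k) :
    v - Pi.single k (v k) ∈ tailSubspace n (k + 1) := by
  refine mem_tailSubspace.mpr fun i hi => ?_
  rcases eq_or_ne i k with rfl | hik
  · simp
  · have : (i : ℕ) ≠ k := Fin.val_ne_of_ne hik
    simp [Pi.single_eq_of_ne hik, mem_tailSubspace.mp hv i (by omega)]

/-- A subspace that contains the `k`-th components of its elements splits them off, and so does
its image under a map acting on the later qubits only. -/
theorem map_eq_of_map_inf_eq (k : Fin n) {S : Submodule (ZMod 2) (BinVec n)}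
    (hS : S ≤ tailSubspace n k) {L : Set (ZMod 2 × ZMod 2)}
    (hL : ∀ x ∈ L, Pi.single k x ∈ S) (hSL : ∀ v ∈ S, v k ∈ L)
    {g : BinVec n →ₗ[ZMod 2] BinVec n} (hg : IsTailClifford (k + 1) g)
    {T : Submodule (ZMod 2) (BinVec n)}
    (hT : (S ⊓ tailSubspace n (k + 1)).map g = T) :
    ∀ v, v ∈ S.map g ↔ v k ∈ L ∧ v - Pi.single k (v k) ∈ T := by
  have hfix : ∀ x, g (Pi.single k x) = Pi.single k x := fun x => hg.fixes _ fun i hi =>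
    Pi.single_eq_of_ne (M := fun _ => ZMod 2 × ZMod 2) (by rintro rfl; omega) x
  have hk : ∀ v, g v k = v k := fun v => sub_eq_zero.mp <| by
    simpa using mem_tailSubspace.mp (hg.sub_mem v) k (Nat.lt_succ_self _)
  subst hT
  intro v
  constructor
  · rintro ⟨u, hu, rfl⟩
    rw [hk]
    refine ⟨hSL u hu, u - Pi.single k (u k),
      ⟨sub_mem hu (hL _ (hSL u hu)), sub_single_mem_tailSubspace k (hS hu)⟩, ?_⟩
    rw [map_sub, hfix]
  · rintro ⟨hv, u, ⟨hu, -⟩, huv⟩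
    refine ⟨u + Pi.single k (v k), add_mem hu (hL _ hv), ?_⟩
    rw [map_add, hfix, huv, sub_add_cancel]

theorem mem_stdSubspace_iff_sub_single (k : Fin n) {k' l l' m : ℕ} (hk' : k' = k + 1)
    (hl' : l' = max l k') (hm : k' ≤ m) {v : BinVec n} :
    v ∈ stdSubspace n k l m ↔
      (l ≤ k → (v k).1 = 0) ∧ v - Pi.single k (v k) ∈ stdSubspace n k' l' m := by
  have hne : ∀ i, i ≠ k → (v - Pi.single k (v k) : BinVec n) i = v i := fun i hi => by
    simp [Pi.single_eq_of_ne hi]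
  have hval : ∀ i, i ≠ k → (i : ℕ) ≠ k := fun i hi => Fin.val_ne_of_ne hi
  simp only [mem_stdSubspace]
  constructor
  · refine fun h => ⟨(h k).2.1, fun i => ?_⟩
    rcases eq_or_ne i k with rfl | hi
    · simp
    · have := hval i hi
      rw [hne i hi]
      exact ⟨fun _ => (h i).1 (by omega), fun _ => (h i).2.1 (by omega), (h i).2.2⟩
  · rintro ⟨hk, h⟩ i
    rcases eq_or_ne i k with rfl | hi
    · exact ⟨fun h => absurd h (lt_irrefl _), hk, fun _ => by omega⟩
    · have := hval i hi
      have h := h i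
      rw [hne i hi] at h
      exact ⟨fun _ => h.1 (by omega), fun hli => by
        rcases lt_or_ge (i : ℕ) k' with hik | hik
        · rw [h.1 hik]; rfl
        · exact h.2.1 (by omega), h.2.2⟩

theorem stdSubspace_self (k : ℕ) : stdSubspace n k k k = ⊥ := by
  refine (Submodule.eq_bot_iff _).mpr fun v hv => funext fun i => ?_
  rcases lt_or_ge (i : ℕ) k with h | h
  · exact (hv i).1 h
  · exact Prod.ext ((hv i).2.1 h) ((hv i).2.2 h)

theorem exists_map_eq_stdSubspace_of_isotropic (d : ℕ) : ∀ (k : ℕ), k + d = n →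
    ∀ S : Submodule (ZMod 2) (BinVec n), S ≤ tailSubspace n k →
      (∀ u ∈ S, ∀ v ∈ S, sympForm n u v = 0) →
      ∃ g, IsTailClifford k g ∧ ∃ m, k ≤ m ∧ m ≤ n ∧ S.map g = stdSubspace n k k m := by
  induction d with
  | zero =>
    rintro k rfl S hS -
    refine ⟨LinearMap.id, IsTailClifford.id _, k, le_rfl, le_rfl, ?_⟩
    rw [Submodule.map_id, stdSubspace_self]
    exact le_bot_iff.mp (hS.trans (stdSubspace_self k).le)
  | succ d ih =>
    intro k hkd S hS hiso
    rcases eq_or_ne S ⊥ with rfl | hbot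
    · exact ⟨LinearMap.id, IsTailClifford.id _, k, le_rfl, by omega, by
        rw [Submodule.map_id, stdSubspace_self]⟩
    obtain ⟨k, rfl⟩ : ∃ k' : Fin n, (k' : ℕ) = k := ⟨⟨k, by omega⟩, rfl⟩
    obtain ⟨u, hu, hu0⟩ := (Submodule.ne_bot_iff S).mp hbot
    obtain ⟨g, hg, hgu⟩ := exists_isTailClifford_map_eq (hS hu)
      (single_mem_tailSubspace k (0, 1)) hu0 (by simp)
    have he : Pi.single k (0, 1) ∈ S.map g := ⟨u, hu, hgu⟩
    have hS' : S.map g ≤ tailSubspace n k := by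
      rintro _ ⟨v, hv, rfl⟩
      exact hg.map_mem (hS hv)
    have hiso' : ∀ u ∈ S.map g, ∀ v ∈ S.map g, sympForm n u v = 0 := by
      rintro _ ⟨u, hu, rfl⟩ _ ⟨v, hv, rfl⟩
      rw [hg.isometry, hiso u hu v hv]
    obtain ⟨h, hh, m, hkm, hmn, hmap⟩ := ih (k + 1) (by omega) (S.map g ⊓ tailSubspace n (k + 1))
      inf_le_right fun u hu v hv => hiso' u hu.1 v hv.1
    refine ⟨h ∘ₗ g, (hh.mono (Nat.le_succ _)).comp hg, m, by omega, hmn, ?_⟩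
    ext v
    rw [Submodule.map_comp, mem_stdSubspace_iff_sub_single k rfl
      (max_eq_right (Nat.le_succ _)).symm hkm,
      map_eq_of_map_inf_eq k hS' (L := {x | x.1 = 0}) _ _ hh hmap]
    · simp
    · rintro ⟨x, z⟩ rfl
      simpa [← Pi.single_smul] using Submodule.smul_mem _ z he
    · intro v hv
      simpa [sympForm_single] using hiso' v hv _ he

theorem exists_map_eq_stdSubspace (d : ℕ) : ∀ (k : ℕ), k + d = n →
    ∀ S : Submodule (ZMod 2) (BinVec n), S ≤ tailSubspace n k →
      ∃ g, IsTailClifford k g ∧ ∃ l m, k ≤ l ∧ l ≤ m ∧ m ≤ n ∧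
        S.map g = stdSubspace n k l m := by
  induction d with
  | zero =>
    rintro k rfl S hS
    refine ⟨LinearMap.id, IsTailClifford.id _, k, k, le_rfl, le_rfl, le_rfl, ?_⟩
    rw [Submodule.map_id, stdSubspace_self]
    exact le_bot_iff.mp (hS.trans (stdSubspace_self k).le)
  | succ d ih =>
    intro k hkd S hS
    by_cases hiso : ∀ u ∈ S, ∀ v ∈ S, sympForm n u v = 0
    · obtain ⟨g, hg, m, hkm, hmn, hmap⟩ := exists_map_eq_stdSubspace_of_isotropic _ k hkd S hS hiso
      exact ⟨g, hg, k, m, le_rfl, hkm, hmn, hmap⟩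
    push Not at hiso
    obtain ⟨u, hu, v, hv, huv⟩ := hiso
    obtain ⟨k, rfl⟩ : ∃ k' : Fin n, (k' : ℕ) = k := ⟨⟨k, by omega⟩, rfl⟩
    obtain ⟨g, hg, hgu, hgv⟩ := exists_isTailClifford_map_pair k (hS hu) (hS hv)
      (ZMod.two_eq_one_of_ne_zero huv)
    have he : Pi.single k (0, 1) ∈ S.map g := ⟨u, hu, hgu⟩
    have hf : Pi.single k (1, 0) ∈ S.map g := ⟨v, hv, hgv⟩
    have hS' : S.map g ≤ tailSubspace n k := by
      rintro _ ⟨v, hv, rfl⟩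
      exact hg.map_mem (hS hv)
    obtain ⟨h, hh, l, m, hkl, hlm, hmn, hmap⟩ := ih (k + 1) (by omega)
      (S.map g ⊓ tailSubspace n (k + 1)) inf_le_right
    refine ⟨h ∘ₗ g, (hh.mono (Nat.le_succ _)).comp hg, l, m, by omega, hlm, hmn, ?_⟩
    ext v
    rw [Submodule.map_comp, mem_stdSubspace_iff_sub_single k rfl
      (max_eq_left hkl).symm (hkl.trans hlm),
      map_eq_of_map_inf_eq k hS' (L := Set.univ) _ _ hh hmap]
    · have : ¬ l ≤ k := by omega
      simp [this]
    · rintro ⟨x, z⟩ -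
      simpa [← Pi.single_smul, ← Pi.single_add] using
        add_mem (Submodule.smul_mem _ x hf) (Submodule.smul_mem _ z he)
    · simp

/-- The binary coordinates of the elements of a set of operators closed under multiplication. -/
def pauliCoordinates (Q : Set (Op n)) (h1 : (1 : Op n) ∈ Q)
    (hm : ∀ g ∈ Q, ∀ h ∈ Q, g * h ∈ Q) : Submodule (ZMod 2) (BinVec n) :=
  AddSubgroup.toZModSubmodule 2
    { carrier := {v | ∃ c ∈ phases, c • binPauli v ∈ Q}
      zero_mem' := ⟨1, one_mem_phases, by rwa [binPauli_zero, one_smul]⟩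
      add_mem' := by
        rintro u v ⟨c, hc, hu⟩ ⟨d, hd, hv⟩
        obtain ⟨e, he, huv⟩ := binPauli_mul u v
        refine ⟨c * d * e, mul_mem_phases (mul_mem_phases hc hd) he, ?_⟩
        rw [mul_smul, ← huv, ← smul_mul_smul_comm]
        exact hm _ hu _ hv
      neg_mem' := by
        rintro v hv
        rwa [ZModModule.neg_eq_self] }

theorem mem_pauliCoordinates {Q : Set (Op n)} {h1 : (1 : Op n) ∈ Q}
    {hm : ∀ g ∈ Q, ∀ h ∈ Q, g * h ∈ Q} {v : BinVec n} :
    v ∈ pauliCoordinates Q h1 hm ↔ ∃ c ∈ phases, c • binPauli v ∈ Q := Iff.rfl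

theorem mem_stdSubspace_iff_pauliCode {l m : ℕ} (hlm : l ≤ m) {v : BinVec n} :
    v ∈ stdSubspace n 0 l m ↔
      (∀ k : Fin n, l ≤ (k : ℕ) → (k : ℕ) < m → pauliCode (v k) = 0 ∨ pauliCode (v k) = 3) ∧
        ∀ k : Fin n, m ≤ (k : ℕ) → pauliCode (v k) = 0 := by
  simp only [pauliCode_eq_zero_or_three_iff]
  simp only [pauliCode_eq_zero_iff, mem_stdSubspace]
  refine ⟨fun h => ⟨fun k hk _ => (h k).2.1 hk, fun k hk =>
    Prod.ext ((h k).2.1 (hlm.trans hk)) ((h k).2.2 hk)⟩, fun ⟨h, h'⟩ k =>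
    ⟨fun hk => absurd hk (Nat.not_lt_zero _), fun hk => ?_, fun hk => by simp [h' k hk]⟩⟩
  rcases lt_or_ge (k : ℕ) m with hkm | hkm
  · exact h k hk hkm
  · simp [h' k hkm]

end Symplectic

/-- every subgroup of the Pauli group is, up to phases, Clifford-equivalent
to a standard form `{I,X,Y,Z}^⊗n₁ ⊗ {I,Z}^⊗n₂ ⊗ {I}^⊗n₃`. -/
theorem stmt12 {n : ℕ} (Q : Set (Op n)) (hQP : Q ⊆ PauliGroup n)
    (hQ1 : (1 : Op n) ∈ Q) (hQm : ∀ g ∈ Q, ∀ h ∈ Q, g * h ∈ Q)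
    (hQi : ∀ g ∈ Q, gᴴ ∈ Q) :
    ∃ W : Op n, IsClifford W ∧ ∃ n₁ n₂ n₃ : ℕ, n₁ + n₂ + n₃ = n ∧
      {P : Op n | ∃ c ∈ phases, ∃ q ∈ Q, P = c • (W * q * Wᴴ)} =
      {P : Op n | ∃ c ∈ phases, ∃ a : Fin n → Fin 4,
        (∀ k : Fin n, n₁ ≤ (k : ℕ) → (k : ℕ) < n₁ + n₂ → (a k = 0 ∨ a k = 3)) ∧
        (∀ k : Fin n, n₁ + n₂ ≤ (k : ℕ) → a k = 0) ∧
        P = c • pauli a} := by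
  obtain ⟨g, hg, l, m, -, hlm, hmn, hmap⟩ := exists_map_eq_stdSubspace n 0 (Nat.zero_add n)
    (pauliCoordinates Q hQ1 hQm) fun v _ => mem_tailSubspace.mpr fun i hi =>
      absurd hi (Nat.not_lt_zero _)
  obtain ⟨W, hW⟩ := hg.implemented
  refine ⟨W, hW.isClifford, l, m - l, n - m, by omega, Set.ext fun P => ?_⟩
  simp only [Set.mem_ofPred_eq, Nat.add_sub_cancel' hlm]
  constructor
  · rintro ⟨c, hc, q, hq, rfl⟩
    obtain ⟨d, hd, a, rfl⟩ := hQP hq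
    obtain ⟨v, -, hv⟩ := exists_binPauli_eq a
    rw [← hv] at hq ⊢
    obtain ⟨e, he, hWv⟩ := hW.2 v
    have hgv : g v ∈ stdSubspace n 0 l m :=
      hmap ▸ Submodule.mem_map_of_mem (mem_pauliCoordinates.mpr ⟨d, hd, hq⟩)
    obtain ⟨h₂, h₃⟩ := (mem_stdSubspace_iff_pauliCode hlm).mp hgv
    refine ⟨c * (d * e), mul_mem_phases hc (mul_mem_phases hd he), _, h₂, h₃, ?_⟩
    rw [Matrix.mul_smul, Matrix.smul_mul, hWv, smul_smul d, smul_smul c]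
    rfl
  · rintro ⟨c, hc, a, h₂, h₃, rfl⟩
    obtain ⟨w, hwa, hw⟩ := exists_binPauli_eq a
    simp only [← hwa] at h₂ h₃
    have hmem := (mem_stdSubspace_iff_pauliCode hlm).mpr ⟨h₂, h₃⟩
    rw [← hmap] at hmem
    obtain ⟨v, hv, rfl⟩ := hmem
    obtain ⟨d, hd, hq⟩ := mem_pauliCoordinates.mp hv
    obtain ⟨e, he, hWv⟩ := hW.2 v
    have hde := mul_mem_phases hd he
    refine ⟨c * (d * e)⁻¹, mul_mem_phases hc (inv_mem_phases hde), _, hq, ?_⟩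
    rw [Matrix.mul_smul, Matrix.smul_mul, hWv, smul_smul d, smul_smul, mul_assoc c,
      inv_mul_cancel₀ (ne_zero_of_mem_phases hde), mul_one, hw]
end
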